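/- For any category C, the category Fam C is finitary extensive: it has finite coproducts, and binary coproduct cocones are van Kampen (coproducts are disjoint and universal). -/

import Mathlib

open CategoryTheory Limits

universe v u

/-- The free coproduct completion of `C`: objects are families of objects of `C`
indexed by a type. -/
structure Fam (C : Type u) [Category.{v} C] : Type (max u 1) where
  idx : Type
  fam : idx → C

namespace Fam

variable {C : Type u} [Category.{v} C]

/-- Morphisms in `Fam C`. -/
structure Hom (X Y : Fam C) : Type v where
  base : X.idx → Y.idx
  fiber : ∀ i, X.fam i ⟶ Y.fam (base i)

instance : Category.{v} (Fam C) where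
  Hom X Y := Hom X Y
  id X := ⟨fun i => i, fun i => 𝟙 (X.fam i)⟩
  comp f g := ⟨fun i => g.base (f.base i), fun i => f.fiber i ≫ g.fiber (f.base i)⟩
  id_comp f := by cases f; simp
  comp_id f := by cases f; simp
  assoc f g h := by cases f; cases g; cases h; simp

end Fam

/-- The singleton embedding `σ : C ⥤ Fam C`. -/
def famSingleton (C : Type u) [Category.{v} C] : C ⥤ Fam C where
  obj X := ⟨PUnit, fun _ => X⟩
  map u := ⟨fun i => i, fun _ => u⟩
  map_id _ := rfl
  map_comp _ _ := rfl

namespace Fam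

section aux

variable {C : Type u} [Category.{v} C]

theorem hom_ext' {X Y : Fam C} {f g : X ⟶ Y} (h : ∀ i, f.base i = g.base i)
    (h' : ∀ i, f.fiber i ≫ eqToHom (congrArg Y.fam (h i)) = g.fiber i) : f = g := by
  obtain ⟨fb, ff⟩ := f
  obtain ⟨gb, gf⟩ := g
  obtain rfl : fb = gb := funext h
  obtain rfl : ff = gf := funext fun i => by simpa using h' i
  rfl

theorem base_congr {X Y : Fam C} {f g : X ⟶ Y} (h : f = g) (i : X.idx) :
    f.base i = g.base i := by rw [h]

theorem fiber_congr {X Y : Fam C} {f g : X ⟶ Y} (h : f = g) (i : X.idx) :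
    f.fiber i ≫ eqToHom (congrArg Y.fam (base_congr h i)) = g.fiber i := by
  subst h; simp

theorem fiber_index {X Y : Fam C} (f : X ⟶ Y) {i j : X.idx} (h : i = j) :
    f.fiber i = eqToHom (congrArg X.fam h) ≫ f.fiber j ≫
      eqToHom (congrArg (fun t => Y.fam (f.base t)) h.symm) := by
  subst h; simp

theorem comp_base {X Y Z : Fam C} (f : X ⟶ Y) (g : Y ⟶ Z) (i : X.idx) :
    (f ≫ g).base i = g.base (f.base i) := rfl

theorem comp_fiber {X Y Z : Fam C} (f : X ⟶ Y) (g : Y ⟶ Z) (i : X.idx) :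
    (f ≫ g).fiber i = f.fiber i ≫ g.fiber (f.base i) := rfl

/-- Summand inclusions: injective on indices and invertible on fibers. -/
structure Incl {X Y : Fam C} (f : X ⟶ Y) : Prop where
  inj : Function.Injective f.base
  iso : ∀ i, IsIso (f.fiber i)

theorem Incl.comp {X Y Z : Fam C} {f : X ⟶ Y} {g : Y ⟶ Z} (hf : Incl f) (hg : Incl g) :
    Incl (f ≫ g) := by
  refine ⟨hg.inj.comp hf.inj, fun i => ?_⟩
  have := hf.iso i
  have := hg.iso (f.base i)
  rw [comp_fiber]
  infer_instance

theorem Incl.mono {X Y : Fam C} {f : X ⟶ Y} (hf : Incl f) : Mono f := by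
  refine ⟨fun {W} g h e => ?_⟩
  have hb : ∀ i, g.base i = h.base i := fun i => hf.inj (base_congr e i)
  refine hom_ext' hb fun i => ?_
  have := hf.iso (h.base i)
  have e' := fiber_congr e i
  rw [← cancel_mono (f.fiber (h.base i))]
  rw [comp_fiber, comp_fiber, fiber_index f (hb i)] at e'
  simpa using e'

theorem Incl.lift {X Y W : Fam C} {f : X ⟶ Y} (hf : Incl f) (h : W ⟶ Y)
    (hr : ∀ w, ∃ x, f.base x = h.base w) : ∃ k : W ⟶ X, k ≫ f = h := by
  choose b hb using hr
  have := hf.iso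
  refine ⟨⟨b, fun w => h.fiber w ≫ eqToHom (congrArg Y.fam (hb w).symm) ≫
    inv (f.fiber (b w))⟩, ?_⟩
  refine hom_ext' hb fun i => ?_
  rw [comp_fiber]
  simp

theorem Incl.isIso {X Y : Fam C} {f : X ⟶ Y} (hf : Incl f)
    (hs : Function.Surjective f.base) : IsIso f := by
  obtain ⟨k, hk⟩ := hf.lift (𝟙 Y) hs
  have := hf.mono
  exact ⟨k, by rw [← cancel_mono f, Category.assoc, hk]; simp, hk⟩

theorem base_bij_of_iso {X Y : Fam C} (e : X ≅ Y) : Function.Bijective e.hom.base :=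
  Function.bijective_iff_has_inverse.2
    ⟨e.inv.base, fun i => base_congr e.hom_inv_id i, fun i => base_congr e.inv_hom_id i⟩

theorem incl_of_iso {X Y : Fam C} (e : X ≅ Y) : Incl e.hom := by
  refine ⟨(base_bij_of_iso e).1, fun i => ?_⟩
  have h1 : ∀ i, IsSplitMono (e.hom.fiber i) := fun i =>
    ⟨⟨⟨e.inv.fiber (e.hom.base i) ≫ eqToHom (congrArg X.fam (base_congr e.hom_inv_id i)), by
      have := fiber_congr e.hom_inv_id i
      rw [comp_fiber, Category.assoc] at this
      exact this⟩⟩⟩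
  have h2 : ∀ j, Epi (e.hom.fiber (e.inv.base j)) := fun j => by
    have hE : e.hom.base (e.inv.base j) = j := base_congr e.inv_hom_id j
    have h : (e.inv.fiber j ≫ e.hom.fiber (e.inv.base j)) ≫ eqToHom (congrArg Y.fam hE) =
        𝟙 (Y.fam j) := fiber_congr e.inv_hom_id j
    have h3 : IsSplitEpi (e.hom.fiber (e.inv.base j)) :=
      ⟨⟨⟨eqToHom (congrArg Y.fam hE) ≫ e.inv.fiber j, by
        rw [← cancel_mono (eqToHom (congrArg Y.fam hE)), Category.assoc, Category.assoc,
          ← Category.assoc (e.inv.fiber j), h]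
        simp⟩⟩⟩
    infer_instance
  have h4 : Epi (e.hom.fiber i) := by
    have := h2 (e.hom.base i)
    rwa [show e.inv.base (e.hom.base i) = i from base_congr e.hom_inv_id i] at this
  have := h1 i
  exact isIso_of_epi_of_isSplitMono _

/-- The concrete binary coproduct. -/
def sum (X Y : Fam C) : Fam C := ⟨X.idx ⊕ Y.idx, Sum.elim X.fam Y.fam⟩

def sumInl (X Y : Fam C) : X ⟶ sum X Y := ⟨Sum.inl, fun i => 𝟙 (X.fam i)⟩

def sumInr (X Y : Fam C) : Y ⟶ sum X Y := ⟨Sum.inr, fun i => 𝟙 (Y.fam i)⟩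

def sumDesc {X Y Z : Fam C} (f : X ⟶ Z) (g : Y ⟶ Z) : sum X Y ⟶ Z :=
  ⟨Sum.elim f.base g.base, fun i => match i with
    | Sum.inl i => f.fiber i
    | Sum.inr i => g.fiber i⟩

theorem sumInl_desc {X Y Z : Fam C} (f : X ⟶ Z) (g : Y ⟶ Z) :
    sumInl X Y ≫ sumDesc f g = f :=
  hom_ext' (fun _ => rfl) fun i => 
    (Category.comp_id _).trans (Category.id_comp (f.fiber i))

theorem sumInr_desc {X Y Z : Fam C} (f : X ⟶ Z) (g : Y ⟶ Z) :
    sumInr X Y ≫ sumDesc f g = g :=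
  hom_ext' (fun _ => rfl) fun i => 
    (Category.comp_id _).trans (Category.id_comp (g.fiber i))

theorem sum_hom_ext {X Y Z : Fam C} {f g : sum X Y ⟶ Z}
    (h₁ : sumInl X Y ≫ f = sumInl X Y ≫ g) (h₂ : sumInr X Y ≫ f = sumInr X Y ≫ g) : f = g := by
  refine hom_ext' (fun i => ?_) (fun i => ?_)
  · rcases i with i | i
    · exact base_congr h₁ i
    · exact base_congr h₂ i
  · rcases i with i | i
    · have := fiber_congr h₁ i
      rw [comp_fiber, comp_fiber] at this
      erw [Category.id_comp, Category.id_comp] at this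
      exact this
    · have := fiber_congr h₂ i
      rw [comp_fiber, comp_fiber] at this
      erw [Category.id_comp, Category.id_comp] at this
      exact this

def sumCofan (X Y : Fam C) : BinaryCofan X Y := BinaryCofan.mk (sumInl X Y) (sumInr X Y)

def sumIsColimit (X Y : Fam C) : IsColimit (sumCofan X Y) :=
  BinaryCofan.isColimitMk (fun s => sumDesc s.inl s.inr)
    (fun _ => sumInl_desc _ _) (fun _ => sumInr_desc _ _)
    (fun _ _ h₁ h₂ => sum_hom_ext (h₁.trans (sumInl_desc _ _).symm)
      (h₂.trans (sumInr_desc _ _).symm))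

theorem incl_sumInl (X Y : Fam C) : Incl (sumInl X Y) :=
  ⟨Sum.inl_injective, fun i => inferInstanceAs (IsIso (𝟙 (X.fam i)))⟩

theorem incl_sumInr (X Y : Fam C) : Incl (sumInr X Y) :=
  ⟨Sum.inr_injective, fun i => inferInstanceAs (IsIso (𝟙 (Y.fam i)))⟩

/-- Two maps exhibit their target as a disjoint union of summands. -/
structure IsSum {X Y Z : Fam C} (f : X ⟶ Z) (g : Y ⟶ Z) : Prop where
  left : Incl f
  right : Incl g
  disj : ∀ x y, f.base x ≠ g.base y
  cover : ∀ z, (∃ x, f.base x = z) ∨ ∃ y, g.base y = z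

theorem isColimit_iff {X Y : Fam C} (c : BinaryCofan X Y) :
    Nonempty (IsColimit c) ↔ IsSum c.inl c.inr := by
  constructor
  · rintro ⟨hc⟩
    let e : sum X Y ≅ c.pt := (sumIsColimit X Y).coconePointUniqueUpToIso hc
    have h₁ : sumInl X Y ≫ e.hom = c.inl :=
      (sumIsColimit X Y).comp_coconePointUniqueUpToIso_hom hc ⟨WalkingPair.left⟩
    have h₂ : sumInr X Y ≫ e.hom = c.inr :=
      (sumIsColimit X Y).comp_coconePointUniqueUpToIso_hom hc ⟨WalkingPair.right⟩
    rw [← h₁, ← h₂]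
    refine ⟨(incl_sumInl X Y).comp (incl_of_iso e), (incl_sumInr X Y).comp (incl_of_iso e), ?_, ?_⟩
    · intro x y h
      exact Sum.inl_ne_inr ((base_bij_of_iso e).1 h)
    · intro z
      obtain ⟨x | y, h⟩ := (base_bij_of_iso e).2 z
      · exact Or.inl ⟨x, h⟩
      · exact Or.inr ⟨y, h⟩
  · intro h
    have hi : Incl (sumDesc c.inl c.inr) := by
      refine ⟨?_, ?_⟩
      · rintro (x | x) (y | y) hxy
        · exact congrArg _ (h.left.inj hxy)
        · exact (h.disj _ _ hxy).elim
        · exact (h.disj _ _ hxy.symm).elim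
        · exact congrArg _ (h.right.inj hxy)
      · rintro (x | x)
        · exact h.left.iso x
        · exact h.right.iso x
    have : IsIso (sumDesc c.inl c.inr) := by
      refine hi.isIso fun z => ?_
      rcases h.cover z with ⟨x, hx⟩ | ⟨y, hy⟩
      · exact ⟨Sum.inl x, hx⟩
      · exact ⟨Sum.inr y, hy⟩
    refine ⟨(sumIsColimit X Y).ofIsoColimit (BinaryCofan.ext (@asIso _ _ (sum X Y) c.pt (sumDesc c.inl c.inr) this) ?_ ?_)⟩
    · exact sumInl_desc _ _
    · exact sumInr_desc _ _

theorem isPullback_of_incl {P Z A B : Fam C} {fst : P ⟶ Z} {snd : P ⟶ A} {f : Z ⟶ B} {g : A ⟶ B}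
    (hg : Incl g) (w : fst ≫ f = snd ≫ g) (hfst : Incl fst)
    (hr : ∀ z a, g.base a = f.base z → ∃ p, fst.base p = z) : IsPullback fst snd f g := by
  have := hg.mono
  have := hfst.mono
  have hl : ∀ s : PullbackCone f g, ∃ k : s.pt ⟶ P, k ≫ fst = s.fst := fun s =>
    hfst.lift s.fst fun i => hr _ (s.snd.base i) (base_congr s.condition i).symm
  choose k hk using hl
  refine ⟨⟨w⟩, ⟨PullbackCone.IsLimit.mk w k hk (fun s => ?_) (fun s m h₁ _ => ?_)⟩⟩
  · rw [← cancel_mono g, Category.assoc, ← w, ← Category.assoc, hk, s.condition]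
  · rw [← cancel_mono fst, h₁, hk]

theorem exists_isPullback {Z A B : Fam C} (f : Z ⟶ B) {g : A ⟶ B} (hg : Incl g) :
    ∃ (P : Fam C) (fst : P ⟶ Z) (snd : P ⟶ A), IsPullback fst snd f g ∧ Incl fst ∧
      ∀ z a, g.base a = f.base z → ∃ p, fst.base p = z := by
  let P : Fam C := ⟨{z : Z.idx // ∃ a, g.base a = f.base z}, fun z => Z.fam z.1⟩
  let fst : P ⟶ Z := ⟨Subtype.val, fun z => 𝟙 (Z.fam z.1)⟩
  have hfst : Incl fst := ⟨Subtype.val_injective, fun z => inferInstanceAs (IsIso (𝟙 (Z.fam z.1)))⟩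
  have hr : ∀ z a, g.base a = f.base z → ∃ p, fst.base p = z := fun z a h => ⟨⟨z, a, h⟩, rfl⟩
  obtain ⟨snd, hs⟩ := hg.lift (fst ≫ f) fun w => w.2
  exact ⟨P, fst, snd, isPullback_of_incl hg hs.symm hfst hr, hfst, hr⟩

theorem incl_of_isPullback {P Z A B : Fam C} {fst : P ⟶ Z} {snd : P ⟶ A} {f : Z ⟶ B} {g : A ⟶ B}
    (hg : Incl g) (h : IsPullback fst snd f g) :
    Incl fst ∧ ∀ z a, g.base a = f.base z → ∃ p, fst.base p = z := by
  obtain ⟨P', fst', snd', h', hi, hr⟩ := exists_isPullback f hg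
  have e := h.isoIsPullback_hom_fst _ _ h'
  have hP : Incl (h.isoIsPullback _ _ h').hom := incl_of_iso _
  refine ⟨e ▸ hP.comp hi, fun z a hz => ?_⟩
  obtain ⟨p, hp⟩ := hr z a hz
  obtain ⟨q, rfl⟩ := (base_bij_of_iso (h.isoIsPullback _ _ h')).2 p
  exact ⟨q, (base_congr e q).symm.trans hp⟩

theorem hasBinaryCoproducts_aux : HasBinaryCoproducts (Fam C) := by
  have : ∀ {X Y : Fam C}, HasColimit (pair X Y) := fun {X Y} => ⟨⟨⟨_, sumIsColimit X Y⟩⟩⟩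
  exact hasBinaryCoproducts_of_hasColimit_pair _

theorem hasInitial_aux : HasInitial (Fam C) := by
  let E : Fam C := ⟨Empty, Empty.elim⟩
  have hE : IsInitial E := IsInitial.ofUniqueHom (fun X => ⟨Empty.elim, fun i => i.elim⟩)
    (fun X m => hom_ext' (fun i => i.elim) (fun i => i.elim))
  exact hE.hasInitial

end aux

end Fam

/-- The free coproduct completion of any category is finitary extensive. -/
theorem Fam.finitaryExtensive (C : Type u) [Category.{v} C] : FinitaryExtensive (Fam C) := by
  have := Fam.hasBinaryCoproducts_aux (C := C)
  have := Fam.hasInitial_aux (C := C)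
  have : HasFiniteCoproducts (Fam C) := hasFiniteCoproducts_of_has_binary_and_initial
  have : HasPullbacksOfInclusions (Fam C) := by
    refine @HasPullbacksOfInclusions.mk _ _ _ fun {X Y Z} f => ?_
    have hs := (Fam.isColimit_iff _).1 ⟨coprodIsCoprod X Y⟩
    obtain ⟨P, fst, snd, h, -⟩ := Fam.exists_isPullback f (g := coprod.inl) hs.left
    exact h.flip.hasPullback
  refine ⟨fun {X Y} c hc => ?_⟩
  have hs := (Fam.isColimit_iff c).1 ⟨hc⟩
  rw [BinaryCofan.isVanKampen_iff]
  intro X' Y' c' αX αY f hX hY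
  rw [Fam.isColimit_iff]
  constructor
  · intro hs'
    refine ⟨Fam.isPullback_of_incl hs.left hX.symm hs'.left fun z a hz => ?_,
      Fam.isPullback_of_incl hs.right hY.symm hs'.right fun z a hz => ?_⟩
    · rcases hs'.cover z with h | ⟨y, rfl⟩
      · exact h
      · exact (hs.disj _ _ (hz.trans (Fam.base_congr hY y).symm)).elim
    · rcases hs'.cover z with ⟨y, rfl⟩ | h
      · exact (hs.disj _ _ (hz.trans (Fam.base_congr hX y).symm).symm).elim
      · exact h
  · rintro ⟨h₁, h₂⟩
    obtain ⟨i₁, r₁⟩ := Fam.incl_of_isPullback hs.left h₁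
    obtain ⟨i₂, r₂⟩ := Fam.incl_of_isPullback hs.right h₂
    refine ⟨i₁, i₂, fun x y h => ?_, fun z => ?_⟩
    · exact hs.disj _ _ ((Fam.base_congr hX x).trans
        ((congrArg f.base h).trans (Fam.base_congr hY y).symm))
    · rcases hs.cover (f.base z) with ⟨a, ha⟩ | ⟨a, ha⟩
      · exact Or.inl (r₁ z a ha)
      · exact Or.inr (r₂ z a ha)
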